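/- Let R be a commutative ring, n ≥ 3, and N ≥ 1. Suppose that every element of E(3,R) can be written as a product v₁·v₂·⋯·v_N of N matrices lying alternately in U⁺(3,R) and U⁻(3,R) (starting with U⁺(3,R)). Then every element of E(n,R) can be written as a product u₁·u₂·⋯·u_N of N matrices lying alternately in U⁺(n,R) and U⁻(n,R) (starting with U⁺(n,R)). -/

import Mathlib

/-!
The proof is a form of Tavgen's rank reduction. Fix three consecutive indices
`k, k + 1, k + 2` and let `φ : SL(3,R) → SL(n,R)` be the corresponding block embedding.
Each of the groups `U = U^±(n,R)` decomposes as `U = φ(U^±(3,R)) V`, where `V = V^±` is the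
unipotent radical of the standard parabolic subgroup whose Levi factor has this one
`3 × 3` block (`unitri_iff`), and `φ(SL(3,R))` normalises both radicals
(`blockEmb_conj_radical`). Hence, in the set `Y = U⁺U⁻U⁺⋯` with `N` factors, the
contributions of the block can be moved to the left, which gives
`Y = φ(U⁺(3,R)U⁻(3,R)⋯) · V⁺V⁻⋯` (`mem_seqProd_iff_of_decomp`). By hypothesis the first factor
is `φ(E(3,R))`, so `Y` is stable under left multiplication by `φ(E(3,R))`, for every `k`
(`map_mul_mem_seqProd`).

The transvections supported in windows of three consecutive indices generate `E(n,R)`, by the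
commutator formula `[e_{ik}(r), e_{kj}(1)] = e_{ij}(r)` (`transvection_mem_of_window`).
So `Y` is stable under `E(n,R)`, and it contains `1`.

Both signs are treated at once by describing triangularity through a height function on the
indices, namely `i ↦ i` for `U⁺` and `i ↦ -i` for `U⁻`; the radicals are described by the same
height with the window collapsed to one point.
-/


/-!
STATEMENT 4. Let `R` be a commutative ring, `n ≥ 3`, and `N ≥ 1`. Suppose that every
element of `E(3,R)` can be written as a product of `N` matrices lying alternately in
`U⁺(3,R)` and `U⁻(3,R)` (starting with `U⁺(3,R)`). Then every element of `E(n,R)` can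
be written as a product of `N` matrices lying alternately in `U⁺(n,R)` and `U⁻(n,R)`
(starting with `U⁺(n,R)`).
-/

/-- The set of elementary transvections `e_{ij}(r) = 1 + r·E_{ij}`, `i ≠ j`, in `SL(n,R)`. -/
def ElemTransvections (n : ℕ) (R : Type) [CommRing R] :
    Set (Matrix.SpecialLinearGroup (Fin n) R) :=
  {g | ∃ (i j : Fin n) (r : R), i ≠ j ∧
    (g : Matrix (Fin n) (Fin n) R) = Matrix.transvection i j r}

/-- The elementary subgroup `E(n,R) ≤ SL(n,R)` generated by all elementary transvections. -/
def ElementarySubgroup (n : ℕ) (R : Type) [CommRing R] :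
    Subgroup (Matrix.SpecialLinearGroup (Fin n) R) :=
  Subgroup.closure (ElemTransvections n R)

/-- The set `U⁺(n,R)` of upper triangular matrices in `SL(n,R)` with all diagonal
entries equal to `1`. -/
def UnitriangularUpper (n : ℕ) (R : Type) [CommRing R] :
    Set (Matrix.SpecialLinearGroup (Fin n) R) :=
  {g | (∀ i : Fin n, (g : Matrix (Fin n) (Fin n) R) i i = 1) ∧
       ∀ i j : Fin n, j < i → (g : Matrix (Fin n) (Fin n) R) i j = 0}

/-- The set `U⁻(n,R)` of lower triangular matrices in `SL(n,R)` with all diagonal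
entries equal to `1`. -/
def UnitriangularLower (n : ℕ) (R : Type) [CommRing R] :
    Set (Matrix.SpecialLinearGroup (Fin n) R) :=
  {g | (∀ i : Fin n, (g : Matrix (Fin n) (Fin n) R) i i = 1) ∧
       ∀ i j : Fin n, i < j → (g : Matrix (Fin n) (Fin n) R) i j = 0}

/-- `g = u₁ ⋯ u_N` where the `uₖ` lie alternately in `U⁺(n,R)` and `U⁻(n,R)`,
starting with `U⁺(n,R)`. -/
def IsAlternatingUnitriangularProd (n : ℕ) (R : Type) [CommRing R] (N : ℕ)
    (g : Matrix.SpecialLinearGroup (Fin n) R) : Prop :=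
  ∃ u : Fin N → Matrix.SpecialLinearGroup (Fin n) R,
    (∀ i : Fin N, (i.val % 2 = 0 → u i ∈ UnitriangularUpper n R) ∧
                  (i.val % 2 = 1 → u i ∈ UnitriangularLower n R)) ∧
    g = (List.ofFn u).prod

/-! ### Products of sequences of subsets -/

section AbstractProducts

open scoped Pointwise

/-- The set `U 0 * U 1 * ⋯ * U (N - 1)` of products. -/
def seqProd {G : Type*} [Group G] (U : ℕ → Set G) : ℕ → Set G
  | 0 => {1}
  | N + 1 => seqProd U N * U N

theorem mem_seqProd_iff {G : Type*} [Group G] (U : ℕ → Set G) (N : ℕ) (g : G) :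
    g ∈ seqProd U N ↔ ∃ u : Fin N → G, (∀ i : Fin N, u i ∈ U i) ∧ g = (List.ofFn u).prod := by
  induction N generalizing g with
  | zero => simp [seqProd]
  | succ N ih =>
    simp only [seqProd, Set.mem_mul, ih]
    constructor
    · rintro ⟨_, ⟨u, hu, rfl⟩, v, hv, rfl⟩
      refine ⟨Fin.snoc (α := fun _ => G) u v, fun i => ?_, ?_⟩
      · induction i using Fin.lastCases with
        | last => simpa using hv
        | cast i => simpa using hu i
      · simp [List.ofFn_succ', -List.ofFn_succ]
    · rintro ⟨u, hu, rfl⟩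
      refine ⟨_, ⟨fun i => u i.castSucc, fun i => hu i.castSucc, rfl⟩, u (Fin.last N),
        by simpa using hu (Fin.last N), ?_⟩
      simp [List.ofFn_succ', -List.ofFn_succ]

theorem seqProd_subset {G : Type*} [Group G] (U : ℕ → Set G) (E : Subgroup G)
    (h : ∀ i, U i ⊆ E) (N : ℕ) : seqProd U N ⊆ E := by
  induction N with
  | zero => simp [seqProd]
  | succ N ih =>
    rintro _ ⟨x, hx, y, hy, rfl⟩
    exact E.mul_mem (ih hx) (h N hy)

theorem conj_mem_seqProd {G : Type*} [Group G] (V : ℕ → Set G) (c : G)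
    (hV : ∀ i, ∀ v ∈ V i, c * v * c⁻¹ ∈ V i) (N : ℕ) :
    ∀ v ∈ seqProd V N, c * v * c⁻¹ ∈ seqProd V N := by
  induction N with
  | zero => simp [seqProd]
  | succ N ih =>
    rintro _ ⟨x, hx, y, hy, rfl⟩
    exact ⟨_, ih x hx, _, hV N y hy, by simp [mul_assoc]⟩

/-- If every `U i` equals `φ(A i) V i` and `φ(H)` normalises every `V i`, then the factors from
`φ(H)` can be collected on the left of a product of the `U i`. -/
theorem mem_seqProd_iff_of_decomp {G H : Type*} [Group G] [Group H] (φ : H →* G)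
    (A : ℕ → Set H) (U V : ℕ → Set G)
    (hU : ∀ i g, g ∈ U i ↔ ∃ a ∈ A i, ∃ v ∈ V i, g = φ a * v)
    (hV : ∀ h i, ∀ v ∈ V i, φ h * v * (φ h)⁻¹ ∈ V i) (N : ℕ) (g : G) :
    g ∈ seqProd U N ↔ ∃ a ∈ seqProd A N, ∃ v ∈ seqProd V N, g = φ a * v := by
  induction N generalizing g with
  | zero => simp [seqProd]
  | succ N ih =>
    constructor
    · rintro ⟨x, hx, y, hy, rfl⟩
      obtain ⟨a, ha, v, hv, rfl⟩ := (ih x).1 hx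
      obtain ⟨b, hb, w, hw, rfl⟩ := (hU N y).1 hy
      refine ⟨a * b, ⟨a, ha, b, hb, rfl⟩, φ b⁻¹ * v * (φ b⁻¹)⁻¹ * w,
        ⟨_, conj_mem_seqProd V _ (hV b⁻¹) N v hv, w, hw, rfl⟩, ?_⟩
      simp [mul_assoc]
    · rintro ⟨_, ⟨a, ha, b, hb, rfl⟩, _, ⟨v, hv, w, hw, rfl⟩, rfl⟩
      refine ⟨φ a * (φ b * v * (φ b)⁻¹),
        (ih _).2 ⟨a, ha, _, conj_mem_seqProd V _ (hV b) N v hv, rfl⟩,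
        φ b * w, (hU N _).2 ⟨b, hb, w, hw, rfl⟩, ?_⟩
      simp [mul_assoc]

/-- In the situation of `mem_seqProd_iff_of_decomp`, if a subgroup `E` of `H` is contained in the
product of the `A i`, each of which lies in `E`, then `φ(E)` acts by left multiplication on the
product of the `U i`. -/
theorem map_mul_mem_seqProd {G H : Type*} [Group G] [Group H] (φ : H →* G)
    (A : ℕ → Set H) (U V : ℕ → Set G)
    (hU : ∀ i g, g ∈ U i ↔ ∃ a ∈ A i, ∃ v ∈ V i, g = φ a * v)
    (hV : ∀ h i, ∀ v ∈ V i, φ h * v * (φ h)⁻¹ ∈ V i) (N : ℕ)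
    (E : Subgroup H) (hA : ∀ i, A i ⊆ E) (hE : ∀ h ∈ E, h ∈ seqProd A N)
    (h : H) (hh : h ∈ E) (g : G) (hg : g ∈ seqProd U N) : φ h * g ∈ seqProd U N := by
  rw [mem_seqProd_iff_of_decomp φ A U V hU hV] at hg ⊢
  obtain ⟨a, ha, v, hv, rfl⟩ := hg
  exact ⟨h * a, hE _ (E.mul_mem hh (seqProd_subset A E hA N ha)), v, hv, by simp [mul_assoc]⟩

/-- The left stabiliser of a subset of a group, as the subgroup of those `g` for which left
multiplication by `g` preserves membership in both directions. -/
def leftStab {G : Type*} [Group G] (Y : Set G) : Subgroup G where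
  carrier := {g | ∀ y, g * y ∈ Y ↔ y ∈ Y}
  one_mem' := by simp
  mul_mem' := by
    intro a b ha hb y
    rw [mul_assoc, ha, hb]
  inv_mem' := by
    intro a ha y
    rw [← ha, mul_inv_cancel_left]

end AbstractProducts

/-! ### A block-embedded special linear group and the attached unipotent radicals -/

section BlockEmbedding

open Matrix

theorem blockDiag_mul_strict {ι R : Type*} [Fintype ι] [CommRing R] (β : ι → ℤ)
    (D M : Matrix ι ι R)
    (hD : ∀ i j, β i ≠ β j → D i j = 0) (hM : ∀ i j, β j ≤ β i → M i j = 0) :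
    ∀ i j, β j ≤ β i → (D * M) i j = 0 := by
  intro i j hij
  rw [Matrix.mul_apply]
  refine Finset.sum_eq_zero fun k _ => ?_
  by_cases hk : β i = β k
  · rw [hM k j (hk ▸ hij), mul_zero]
  · rw [hD i k hk, zero_mul]

theorem strict_mul_blockDiag {ι R : Type*} [Fintype ι] [CommRing R] (β : ι → ℤ)
    (D M : Matrix ι ι R)
    (hD : ∀ i j, β i ≠ β j → D i j = 0) (hM : ∀ i j, β j ≤ β i → M i j = 0) :
    ∀ i j, β j ≤ β i → (M * D) i j = 0 := by
  intro i j hij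
  rw [Matrix.mul_apply]
  refine Finset.sum_eq_zero fun k _ => ?_
  by_cases hk : β k = β j
  · rw [hM i k (hk.symm ▸ hij), zero_mul]
  · rw [hD k j hk, mul_zero]

variable {α τ ι R : Type*} [Fintype α] [DecidableEq α] [Fintype τ] [DecidableEq τ]
  [Fintype ι] [DecidableEq ι] [CommRing R]

/-- The embedding of `SL(α,R)` into `SL(ι,R)` as a diagonal block, where `e` identifies `ι` with
the disjoint union of `α` and a complement on which the image acts trivially. -/
def blockEmb (e : α ⊕ τ ≃ ι) : Matrix.SpecialLinearGroup α R →* Matrix.SpecialLinearGroup ι R where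
  toFun g := ⟨reindex e e (fromBlocks (g : Matrix α α R) 0 0 1), by
    rw [det_reindex_self, det_fromBlocks_zero₂₁, g.det_coe, det_one, one_mul]⟩
  map_one' := by
    apply Subtype.ext
    simp
  map_mul' g h := by
    apply Subtype.ext
    change reindex e e _ = reindex e e _ * reindex e e _
    simp only [reindex_apply]
    rw [submatrix_mul_equiv, fromBlocks_multiply]
    simp

theorem blockEmb_inl_inl (e : α ⊕ τ ≃ ι) (g : Matrix.SpecialLinearGroup α R) (x y : α) :
    (blockEmb e g : Matrix ι ι R) (e (.inl x)) (e (.inl y)) = g x y := by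
  change fromBlocks _ _ _ _ (e.symm _) (e.symm _) = _
  simp

theorem blockEmb_inl_inr (e : α ⊕ τ ≃ ι) (g : Matrix.SpecialLinearGroup α R) (x : α) (y : τ) :
    (blockEmb e g : Matrix ι ι R) (e (.inl x)) (e (.inr y)) = 0 := by
  change fromBlocks _ _ _ _ (e.symm _) (e.symm _) = _
  simp

theorem blockEmb_inr_inl (e : α ⊕ τ ≃ ι) (g : Matrix.SpecialLinearGroup α R) (x : τ) (y : α) :
    (blockEmb e g : Matrix ι ι R) (e (.inr x)) (e (.inl y)) = 0 := by
  change fromBlocks _ _ _ _ (e.symm _) (e.symm _) = _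
  simp

theorem blockEmb_inr_inr (e : α ⊕ τ ≃ ι) (g : Matrix.SpecialLinearGroup α R) (x y : τ) :
    (blockEmb e g : Matrix ι ι R) (e (.inr x)) (e (.inr y)) = (1 : Matrix τ τ R) x y := by
  change fromBlocks _ _ _ _ (e.symm _) (e.symm _) = _
  simp

theorem blockEmb_transvection (e : α ⊕ τ ≃ ι) (x y : α) (hxy : x ≠ y)
    (hxy' : e (.inl x) ≠ e (.inl y)) (r : R) :
    blockEmb e (Matrix.SpecialLinearGroup.transvection hxy r) =
      Matrix.SpecialLinearGroup.transvection hxy' r := by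
  ext i j
  obtain ⟨i | i, rfl⟩ := e.surjective i <;> obtain ⟨j | j, rfl⟩ := e.surjective j <;>
  simp [blockEmb_inl_inl, blockEmb_inl_inr, blockEmb_inr_inl, blockEmb_inr_inr,
    Matrix.SpecialLinearGroup.transvection_coe, Matrix.one_apply, Matrix.single_apply]

/-- Unitriangular matrices for the (pre)order on the index set given by a height function `f`;
taking for `f` the index or its negative gives `U⁺` and `U⁻`. -/
def unitri (f : ι → ℤ) : Set (Matrix.SpecialLinearGroup ι R) :=
  {g | (∀ i, g i i = 1) ∧ ∀ i j, f j < f i → g i j = 0}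

/-- The unipotent radical for a coarse height function `β`: matrices `g` such that `g - 1` is
strictly block triangular, the blocks being the level sets of `β`. -/
def radical (β : ι → ℤ) : Set (Matrix.SpecialLinearGroup ι R) :=
  {g | ∀ i j, β j ≤ β i → ((g : Matrix ι ι R) - 1) i j = 0}

theorem blockEmb_blockDiag (e : α ⊕ τ ≃ ι) (β : ι → ℤ)
    (hβ : ∀ x y, β (e (.inl x)) = β (e (.inl y))) (g : Matrix.SpecialLinearGroup α R) :
    ∀ i j, β i ≠ β j → (blockEmb e g : Matrix ι ι R) i j = 0 := by
  intro i j hij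
  obtain ⟨i | i, rfl⟩ := e.surjective i <;> obtain ⟨j | j, rfl⟩ := e.surjective j
  · exact absurd (hβ i j) hij
  · exact blockEmb_inl_inr ..
  · exact blockEmb_inr_inl ..
  · rw [blockEmb_inr_inr, Matrix.one_apply_ne]
    rintro rfl
    exact hij rfl

theorem blockEmb_conj_radical (e : α ⊕ τ ≃ ι) (β : ι → ℤ)
    (hβ : ∀ x y, β (e (.inl x)) = β (e (.inl y))) (g : Matrix.SpecialLinearGroup α R)
    (v : Matrix.SpecialLinearGroup ι R) (hv : v ∈ radical β) :
    blockEmb e g * v * (blockEmb e g)⁻¹ ∈ radical β := by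
  have key : ((blockEmb e g * v * (blockEmb e g)⁻¹ : Matrix.SpecialLinearGroup ι R) : Matrix ι ι R) - 1 =
      (blockEmb e g : Matrix ι ι R) * ((v : Matrix ι ι R) - 1) * (blockEmb e g⁻¹ :
        Matrix.SpecialLinearGroup ι R) := by
    have h1 : (1 : Matrix ι ι R) = (blockEmb e g : Matrix ι ι R) * (blockEmb e g⁻¹ :
        Matrix.SpecialLinearGroup ι R) := by
      rw [← Matrix.SpecialLinearGroup.coe_mul, ← map_mul, mul_inv_cancel, map_one,
        Matrix.SpecialLinearGroup.coe_one]
    rw [mul_sub, sub_mul, mul_one, ← h1, ← map_inv, Matrix.SpecialLinearGroup.coe_mul,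
      Matrix.SpecialLinearGroup.coe_mul]
  intro i j hij
  rw [key]
  exact strict_mul_blockDiag β _ _ (blockEmb_blockDiag e β hβ g⁻¹)
    (blockDiag_mul_strict β _ _ (blockEmb_blockDiag e β hβ g) hv) i j hij

/-- The Levi decomposition `U(f) = φ(U(f₀)) ⋉ V(β)`, for a coarsening `β` of `f` whose only
non-trivial level set is the embedded block. -/
theorem unitri_iff (e : α ⊕ τ ≃ ι) (f β : ι → ℤ) (f₀ : α → ℤ)
    (hβ : ∀ x y, β (e (.inl x)) = β (e (.inl y)))
    (h1 : ∀ i j, β j < β i → f j < f i) (h2 : ∀ i j, f j < f i → β j ≤ β i)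
    (h3 : ∀ i j, β i = β j → i = j ∨ ∃ x y, i = e (.inl x) ∧ j = e (.inl y))
    (h4 : ∀ x y, f (e (.inl x)) < f (e (.inl y)) ↔ f₀ x < f₀ y)
    (hdet : ∀ A : Matrix α α R, (∀ i, A i i = 1) → (∀ i j, f₀ j < f₀ i → A i j = 0) → A.det = 1)
    (g : Matrix.SpecialLinearGroup ι R) :
    g ∈ unitri f ↔ ∃ a ∈ unitri f₀, ∃ v ∈ radical β, g = blockEmb e a * v := by
  have hφ : ∀ a ∈ (unitri f₀ : Set (Matrix.SpecialLinearGroup α R)), blockEmb e a ∈ unitri f := by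
    rintro a ⟨ha1, ha2⟩
    constructor
    · intro i
      obtain ⟨i | i, rfl⟩ := e.surjective i
      · rw [blockEmb_inl_inl, ha1]
      · rw [blockEmb_inr_inr, Matrix.one_apply_eq]
    · intro i j hij
      obtain ⟨i | i, rfl⟩ := e.surjective i <;> obtain ⟨j | j, rfl⟩ := e.surjective j
      · rw [blockEmb_inl_inl, ha2 _ _ ((h4 _ _).1 hij)]
      · exact blockEmb_inl_inr ..
      · exact blockEmb_inr_inl ..
      · rw [blockEmb_inr_inr, Matrix.one_apply_ne]
        rintro rfl
        exact lt_irrefl _ hij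
  constructor
  · rintro ⟨hg1, hg2⟩
    let a : Matrix.SpecialLinearGroup α R := ⟨fun x y => g (e (.inl x)) (e (.inl y)),
      hdet _ (fun _ => hg1 _) (fun _ _ h => hg2 _ _ ((h4 _ _).2 h))⟩
    have ha : a ∈ unitri f₀ := ⟨fun _ => hg1 _, fun _ _ h => hg2 _ _ ((h4 _ _).2 h)⟩
    refine ⟨a, ha, (blockEmb e a)⁻¹ * g, ?_, by simp⟩
    have key : (((blockEmb e a)⁻¹ * g : Matrix.SpecialLinearGroup ι R) : Matrix ι ι R) - 1 =
        (blockEmb e a⁻¹ : Matrix.SpecialLinearGroup ι R) *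
          ((g : Matrix ι ι R) - (blockEmb e a : Matrix.SpecialLinearGroup ι R)) := by
      rw [mul_sub, ← Matrix.SpecialLinearGroup.coe_mul, ← Matrix.SpecialLinearGroup.coe_mul, ← map_mul,
        inv_mul_cancel, map_one, Matrix.SpecialLinearGroup.coe_one, map_inv]
    intro i j hij
    rw [key]
    refine blockDiag_mul_strict β _ _ (blockEmb_blockDiag e β hβ a⁻¹) (fun i j hij => ?_) i j hij
    rw [Matrix.sub_apply]
    rcases hij.lt_or_eq with hlt | heq
    · rw [hg2 _ _ (h1 _ _ hlt), (hφ a ha).2 _ _ (h1 _ _ hlt), sub_zero]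
    · rcases h3 i j heq.symm with rfl | ⟨x, y, rfl, rfl⟩
      · rw [hg1, (hφ a ha).1, sub_self]
      · rw [blockEmb_inl_inl]
        exact sub_self _
  · rintro ⟨a, ha, v, hv, rfl⟩
    have key : ((blockEmb e a * v : Matrix.SpecialLinearGroup ι R) : Matrix ι ι R) =
        (blockEmb e a : Matrix ι ι R) * ((v : Matrix ι ι R) - 1) +
          (blockEmb e a : Matrix.SpecialLinearGroup ι R) := by
      rw [Matrix.SpecialLinearGroup.coe_mul, mul_sub, mul_one, sub_add_cancel]
    have hs := blockDiag_mul_strict β _ _ (blockEmb_blockDiag e β hβ a) hv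
    constructor
    · intro i
      rw [key, Matrix.add_apply, hs i i le_rfl, (hφ a ha).1, zero_add]
    · intro i j hij
      rw [key, Matrix.add_apply, hs i j (h2 i j hij), (hφ a ha).2 i j hij, zero_add]

end BlockEmbedding

/-! ### Consecutive `3 × 3` blocks -/

section Window

open Matrix

/-- The inclusion of `{0, 1, 2}` into `Fin n` as the window `{k, k + 1, k + 2}`. -/
def windowIncl {n k : ℕ} (hk : k + 3 ≤ n) (x : Fin 3) : Fin n := ⟨k + x, by omega⟩

theorem windowIncl_injective {n k : ℕ} (hk : k + 3 ≤ n) :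
    Function.Injective (windowIncl hk) := by
  intro x y h
  simp only [windowIncl, Fin.mk.injEq] at h
  omega

open Classical in
/-- The splitting of `Fin n` into the window `{k, k + 1, k + 2}` and its complement. -/
noncomputable def windowEquiv {n k : ℕ} (hk : k + 3 ≤ n) :
    Fin 3 ⊕ ((Set.range (windowIncl hk))ᶜ : Set (Fin n)) ≃ Fin n :=
  ((Equiv.ofInjective _ (windowIncl_injective hk)).sumCongr (Equiv.refl _)).trans
    (Equiv.Set.sumCompl _)

theorem windowEquiv_inl {n k : ℕ} (hk : k + 3 ≤ n) (x : Fin 3) :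
    windowEquiv hk (.inl x) = windowIncl hk x := by
  simp [windowEquiv]

/-- The sign of the `m`-th factor: positive for `U⁺`, negative for `U⁻`. -/
def altSign (m : ℕ) : ℤ := if m % 2 = 0 then 1 else -1

theorem altSign_cases (m : ℕ) : altSign m = 1 ∨ altSign m = -1 := by
  unfold altSign
  split_ifs <;> simp

/-- The `m`-th set in the alternating sequence `U⁺(n,R), U⁻(n,R), U⁺(n,R), …`. -/
def altU (n : ℕ) (R : Type) [CommRing R] (m : ℕ) : Set (Matrix.SpecialLinearGroup (Fin n) R) :=
  unitri fun i => altSign m * (i : ℤ)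

theorem altU_even (n : ℕ) (R : Type) [CommRing R] (m : ℕ) (hm : m % 2 = 0) :
    altU n R m = UnitriangularUpper n R := by
  ext g
  simp [altU, unitri, UnitriangularUpper, altSign, hm]

theorem altU_odd (n : ℕ) (R : Type) [CommRing R] (m : ℕ) (hm : m % 2 = 1) :
    altU n R m = UnitriangularLower n R := by
  ext g
  simp [altU, unitri, UnitriangularLower, altSign, hm]

theorem isAlternating_iff (n : ℕ) (R : Type) [CommRing R] (N : ℕ)
    (g : Matrix.SpecialLinearGroup (Fin n) R) :
    IsAlternatingUnitriangularProd n R N g ↔ g ∈ seqProd (altU n R) N := by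
  rw [mem_seqProd_iff]
  refine exists_congr fun u => and_congr_left' (forall_congr' fun i => ?_)
  rcases Nat.mod_two_eq_zero_or_one i with h | h
  · simp [altU_even n R _ h, h]
  · simp [altU_odd n R _ h, h]

theorem det_unitri_three {R : Type} [CommRing R] (m : ℕ) (A : Matrix (Fin 3) (Fin 3) R)
    (h1 : ∀ i, A i i = 1)
    (h2 : ∀ i j : Fin 3, altSign m * (j : ℤ) < altSign m * (i : ℤ) → A i j = 0) :
    A.det = 1 := by
  rw [Matrix.det_fin_three]
  rcases altSign_cases m with h | h <;> rw [h] at h2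
  · simp [h1, h2 1 0 (by decide), h2 2 0 (by decide), h2 2 1 (by decide)]
  · simp [h1, h2 0 1 (by decide), h2 0 2 (by decide), h2 1 2 (by decide)]

theorem transvection_mem_elementary {n : ℕ} {R : Type} [CommRing R] {i j : Fin n} (hij : i ≠ j)
    (r : R) : Matrix.SpecialLinearGroup.transvection hij r ∈ ElementarySubgroup n R :=
  Subgroup.subset_closure ⟨i, j, r, hij, rfl⟩

theorem altU_three_subset (R : Type) [CommRing R] (m : ℕ) :
    altU 3 R m ⊆ ElementarySubgroup 3 R := by
  rintro g ⟨h1, h2⟩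
  have h01 : (0 : Fin 3) ≠ 1 := by decide
  have h02 : (0 : Fin 3) ≠ 2 := by decide
  have h12 : (1 : Fin 3) ≠ 2 := by decide
  rcases altSign_cases m with h | h <;> simp only [h] at h2
  · have hg : g = Matrix.SpecialLinearGroup.transvection h12 (g 1 2) *
        (Matrix.SpecialLinearGroup.transvection h02 (g 0 2) *
          Matrix.SpecialLinearGroup.transvection h01 (g 0 1)) := by
      have h10 := h2 1 0 (by decide)
      have h20 := h2 2 0 (by decide)
      have h21 := h2 2 1 (by decide)
      ext i j
      fin_cases i <;> fin_cases j <;>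
        simp [Matrix.SpecialLinearGroup.transvection_coe, Matrix.mul_apply, Fin.sum_univ_three,
          Matrix.one_apply, Matrix.single_apply, h1, h10, h20, h21]
    rw [hg]
    exact mul_mem (transvection_mem_elementary _ _)
      (mul_mem (transvection_mem_elementary _ _) (transvection_mem_elementary _ _))
  · have hg : g = Matrix.SpecialLinearGroup.transvection h01.symm (g 1 0) *
        (Matrix.SpecialLinearGroup.transvection h02.symm (g 2 0) *
          Matrix.SpecialLinearGroup.transvection h12.symm (g 2 1)) := by
      have h10 := h2 0 1 (by decide)
      have h20 := h2 0 2 (by decide)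
      have h21 := h2 1 2 (by decide)
      ext i j
      fin_cases i <;> fin_cases j <;>
        simp [Matrix.SpecialLinearGroup.transvection_coe, Matrix.mul_apply, Fin.sum_univ_three,
          Matrix.one_apply, Matrix.single_apply, h1, h10, h20, h21]
    rw [hg]
    exact mul_mem (transvection_mem_elementary _ _)
      (mul_mem (transvection_mem_elementary _ _) (transvection_mem_elementary _ _))

/-- The index function on `Fin n` with the window `{k, k + 1, k + 2}` collapsed to `k`. -/
def collapse (n k : ℕ) (i : Fin n) : ℤ := if k ≤ i ∧ (i : ℕ) < k + 3 then k else i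

theorem altU_decomp {n k : ℕ} (hk : k + 3 ≤ n) (R : Type) [CommRing R] (m : ℕ)
    (g : Matrix.SpecialLinearGroup (Fin n) R) :
    g ∈ altU n R m ↔ ∃ a ∈ altU 3 R m,
      ∃ v ∈ radical (fun i => altSign m * collapse n k i), g = blockEmb (windowEquiv hk) a * v := by
  classical
  refine unitri_iff (windowEquiv hk) _ _ _ ?_ ?_ ?_ ?_ ?_ (det_unitri_three m) g
  · intro x y
    simp only [windowEquiv_inl, windowIncl, collapse]
    rw [if_pos (by omega), if_pos (by omega)]
  · intro i j
    simp only [collapse]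
    rcases altSign_cases m with h | h <;> rw [h] <;> split_ifs <;> omega
  · intro i j
    simp only [collapse]
    rcases altSign_cases m with h | h <;> rw [h] <;> split_ifs <;> omega
  · intro i j hij
    by_cases hw : (k ≤ i ∧ (i : ℕ) < k + 3) ∧ (k ≤ j ∧ (j : ℕ) < k + 3)
    · right
      refine ⟨⟨i - k, by omega⟩, ⟨j - k, by omega⟩, ?_, ?_⟩ <;>
        rw [windowEquiv_inl] <;> ext <;> simp only [windowIncl] <;> omega
    · left
      simp only [collapse] at hij
      ext
      rcases altSign_cases m with h | h <;> rw [h] at hij <;> split_ifs at hij <;> omega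
  · intro x y
    simp only [windowEquiv_inl, windowIncl]
    rcases altSign_cases m with h | h <;> rw [h] <;> push_cast <;> omega

theorem transvection_commutator {n : ℕ} {R : Type} [CommRing R] {i j k : Fin n} (hik : i ≠ k)
    (hkj : k ≠ j) (hij : i ≠ j) (r : R) :
    Matrix.SpecialLinearGroup.transvection hij r =
      Matrix.SpecialLinearGroup.transvection hik r * Matrix.SpecialLinearGroup.transvection hkj 1 *
        Matrix.SpecialLinearGroup.transvection hik (-r) * Matrix.SpecialLinearGroup.transvection hkj (-1) := by
  apply Subtype.ext
  simp only [Matrix.SpecialLinearGroup.coe_mul, Matrix.SpecialLinearGroup.transvection_coe]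
  simp [mul_add, add_mul, Matrix.single_mul_single_of_ne, hik.symm, hkj.symm, hij.symm]
  simp [← Matrix.single_neg]
  abel

/-- A subgroup containing the transvections supported in the windows of three consecutive indices
contains all transvections: the others are obtained by commutators, by induction on `|i - j|`. -/
theorem transvection_mem_of_window {n : ℕ} (hn : 3 ≤ n) {R : Type} [CommRing R]
    (T : Subgroup (Matrix.SpecialLinearGroup (Fin n) R))
    (hT : ∀ (k : ℕ) (hk : k + 3 ≤ n), ∀ a ∈ ElementarySubgroup 3 R,
      blockEmb (windowEquiv hk) a ∈ T) (d : ℕ) :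
    ∀ (i j : Fin n) (hij : i ≠ j) (r : R), (i : ℕ) ≤ j + d → (j : ℕ) ≤ i + d →
      Matrix.SpecialLinearGroup.transvection hij r ∈ T := by
  induction d using Nat.strong_induction_on with
  | _ d ih =>
  intro i j hij r h1 h2
  have hne : (i : ℕ) ≠ j := fun h => hij (Fin.ext h)
  by_cases hd : (i : ℕ) ≤ j + 2 ∧ (j : ℕ) ≤ i + 2
  · obtain ⟨k, hk, hki, hkj, hik, hjk⟩ : ∃ k, k + 3 ≤ n ∧ k ≤ i ∧ k ≤ j ∧ (i : ℕ) < k + 3 ∧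
        (j : ℕ) < k + 3 := ⟨min (min (i : ℕ) j) (n - 3), by omega⟩
    obtain ⟨x, hx⟩ : ∃ x, i = windowEquiv hk (.inl x) := by
      refine ⟨⟨i - k, by omega⟩, ?_⟩
      rw [windowEquiv_inl]
      ext
      simp only [windowIncl]
      omega
    obtain ⟨y, hy⟩ : ∃ y, j = windowEquiv hk (.inl y) := by
      refine ⟨⟨j - k, by omega⟩, ?_⟩
      rw [windowEquiv_inl]
      ext
      simp only [windowIncl]
      omega
    subst hx hy
    have hxy : x ≠ y := by
      rintro rfl
      exact hij rfl
    classical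
    have := hT k hk _ (transvection_mem_elementary hxy r)
    rwa [blockEmb_transvection _ _ _ _ hij] at this
  · obtain ⟨k, hk⟩ : ∃ k : Fin n, ((i : ℕ) < k ∧ (k : ℕ) < j) ∨ ((j : ℕ) < k ∧ (k : ℕ) < i) :=
      ⟨⟨min (i : ℕ) j + 1, by omega⟩, by simp only; omega⟩
    have hik : i ≠ k := by
      rintro rfl
      omega
    have hkj : k ≠ j := by
      rintro rfl
      omega
    rw [transvection_commutator hik hkj hij]
    have A := fun s => ih (d - 1) (by omega) i k hik s (by omega) (by omega)
    have B := fun s => ih (d - 1) (by omega) k j hkj s (by omega) (by omega)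
    exact mul_mem (mul_mem (mul_mem (A _) (B _)) (A _)) (B _)

end Window

theorem statement4 (R : Type) [CommRing R] (n : ℕ) (hn : 3 ≤ n) (N : ℕ) (hN : 1 ≤ N)
    (h2 : ∀ g ∈ ElementarySubgroup 3 R, IsAlternatingUnitriangularProd 3 R N g) :
    ∀ g ∈ ElementarySubgroup n R, IsAlternatingUnitriangularProd n R N g := by
  classical
  simp only [isAlternating_iff] at h2 ⊢
  have hmul : ∀ (k : ℕ) (hk : k + 3 ≤ n), ∀ a ∈ ElementarySubgroup 3 R,
      ∀ y ∈ seqProd (altU n R) N, blockEmb (windowEquiv hk) a * y ∈ seqProd (altU n R) N := by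
    intro k hk a ha y hy
    refine map_mul_mem_seqProd (blockEmb (windowEquiv hk)) (altU 3 R) (altU n R)
      (fun m => radical (fun i => altSign m * collapse n k i)) (altU_decomp hk R) ?_ N
      (ElementarySubgroup 3 R) (altU_three_subset R) h2 a ha y hy
    intro h m v hv
    refine blockEmb_conj_radical _ _ (fun x y => ?_) h v hv
    simp only [windowEquiv_inl, windowIncl, collapse]
    rw [if_pos (by omega), if_pos (by omega)]
  have hT : ∀ (k : ℕ) (hk : k + 3 ≤ n), ∀ a ∈ ElementarySubgroup 3 R,
      blockEmb (windowEquiv hk) a ∈ leftStab (seqProd (altU n R) N) := by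
    refine fun k hk a ha y => ⟨fun h => ?_, hmul k hk a ha y⟩
    simpa using hmul k hk a⁻¹ (inv_mem ha) _ h
  have hE : ElementarySubgroup n R ≤ leftStab (seqProd (altU n R) N) := by
    refine (Subgroup.closure_le _).2 ?_
    rintro g ⟨i, j, r, hij, hg⟩
    have : g = Matrix.SpecialLinearGroup.transvection hij r := Subtype.ext hg
    rw [this]
    exact transvection_mem_of_window hn _ hT n i j hij r (by omega) (by omega)
  have h1 : (1 : Matrix.SpecialLinearGroup (Fin n) R) ∈ seqProd (altU n R) N := by
    refine (mem_seqProd_iff _ _ _).2 ⟨fun _ => 1, fun m => ⟨fun i => by simp, fun i j hij => ?_⟩,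
      by simp⟩
    rw [Matrix.SpecialLinearGroup.coe_one, Matrix.one_apply_ne]
    rintro rfl
    exact lt_irrefl _ hij
  intro g hg
  simpa using (hE hg 1).2 h1
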